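/- Let p be a prime, k a field of characteristic p, G = (ℤ/p)^n, and A = k[x_1,…,x_n] the polynomial ring graded by deg(x_i) = −1. Let b_n be the minimum of Σ_i dim_k {}_1H_i(M⊗_A k), where M ranges over the finitely generated, free p-DG A-modules such that {}_sH_•(M⊗_A k) ≠ 0 and dim_k {}_sH_•(M) < ∞ for all 1 ≤ s ≤ p−1. Then Σ_i dim_k H_i(C) ≥ b_n for every non-acyclic perfect chain complex C of k[G]-modules. -/

import Mathlib

/-! Statement 1: Theorem 1.4/5.6 (`Σ_i dim_k H_i(C) ≥ b_n`), where `b_n` is the minimum of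
`Σ_i dim_k ₁H_i(M ⊗_A k)` over finitely generated free `p`-DG `A`-modules `M` with
`ₛH(M ⊗_A k) ≠ 0` and `dim_k ₛH(M) < ∞` for all `1 ≤ s ≤ p-1`. -/

/-- The group algebra `k[(ℤ/p)ⁿ]`. -/
abbrev GroupRing (p n : ℕ) (k : Type) [Field k] : Type := AddMonoidAlgebra k (Fin n → ZMod p)

/-- A `ℤ`-graded `N`-complex of modules over the group algebra `k[(ℤ/p)ⁿ]`:
a module with an internal grading and a degree `-1` differential `d` with `d ^ N = 0`. -/
structure KGCx (p n : ℕ) (k : Type) [Field k] (N : ℕ) : Type 1 where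
  X : Type
  [acg : AddCommGroup X]
  [modR : Module (GroupRing p n k) X]
  [modk : Module k X]
  [tower : IsScalarTower k (GroupRing p n k) X]
  d : X →ₗ[GroupRing p n k] X
  gr : ℤ → Submodule (GroupRing p n k) X
  internal : DirectSum.IsInternal gr
  d_deg : ∀ m : ℤ, ∀ x ∈ gr m, d x ∈ gr (m - 1)
  d_pow : d ^ N = 0

attribute [instance] KGCx.acg KGCx.modR KGCx.modk KGCx.tower

namespace KGCx

variable {p n N : ℕ} {k : Type} [Field k] (C : KGCx p n k N)

/-- Perfect: the underlying graded module has a finite homogeneous basis over the group ring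
(i.e. it is a bounded complex of finitely generated free modules). -/
def IsPerfect : Prop :=
  ∃ (ι : Type) (_ : Fintype ι) (deg : ι → ℤ) (b : Module.Basis ι (GroupRing p n k) C.X),
    ∀ a, b a ∈ C.gr (deg a)

/-- Non-acyclic: the (total) homology is nonzero. -/
def NonAcyclic : Prop := ∃ x : C.X, C.d x = 0 ∧ x ∉ LinearMap.range C.d

/-- The differential as a `k`-linear map. -/
noncomputable def dk : C.X →ₗ[k] C.X := C.d.restrictScalars k

/-- The total homology `ker d ⧸ im d` as a `k`-vector space; its dimension is
`Σ_i dim_k H_i(C)`. -/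
noncomputable abbrev TotalHomology : Type :=
  ↥(LinearMap.ker C.dk) ⧸ (LinearMap.range C.dk).comap (LinearMap.ker C.dk).subtype

end KGCx

/-- The polynomial ring `A = k[x_1,…,x_n]` (graded by `deg x_i = -1` via the gradings below). -/
abbrev PolyA (n : ℕ) (k : Type) [Field k] : Type := MvPolynomial (Fin n) k

/-- A `p`-DG module over `A = k[x_1,…,x_n]` with `deg x_i = -1`: a graded `A`-module together
with an `A`-linear differential of degree `-1` satisfying `d ^ p = 0`. -/
structure PDG (p n : ℕ) (k : Type) [Field k] : Type 1 where
  X : Type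
  [acg : AddCommGroup X]
  [modA : Module (PolyA n k) X]
  [modk : Module k X]
  [tower : IsScalarTower k (PolyA n k) X]
  d : X →ₗ[PolyA n k] X
  gr : ℤ → Submodule k X
  internal : DirectSum.IsInternal gr
  x_deg : ∀ (i : Fin n) (m : ℤ), ∀ x ∈ gr m, (MvPolynomial.X i : PolyA n k) • x ∈ gr (m - 1)
  d_deg : ∀ m : ℤ, ∀ x ∈ gr m, d x ∈ gr (m - 1)
  d_pow : d ^ p = 0

attribute [instance] PDG.acg PDG.modA PDG.modk PDG.tower

namespace PDG
variable {p n : ℕ} {k : Type} [Field k] (M : PDG p n k)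

/-- `M` is free as a graded `A`-module: it has a homogeneous `A`-basis. -/
def IsFree : Prop :=
  ∃ (ι : Type) (deg : ι → ℤ) (b : Module.Basis ι (PolyA n k) M.X), ∀ a, b a ∈ M.gr (deg a)

/-- `M` is free and finitely generated as a graded `A`-module. -/
def IsFreeFG : Prop :=
  ∃ (ι : Type) (_ : Fintype ι) (deg : ι → ℤ) (b : Module.Basis ι (PolyA n k) M.X),
    ∀ a, b a ∈ M.gr (deg a)

/-- The submodule `(x_1,…,x_n)·M`, i.e. the kernel of `M → M ⊗_A k`. -/
noncomputable def IM : Submodule (PolyA n k) M.X :=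
  (Ideal.span (Set.range (MvPolynomial.X : Fin n → PolyA n k))) • (⊤ : Submodule (PolyA n k) M.X)

/-- The differential as a `k`-linear map. -/
noncomputable def dk : M.X →ₗ[k] M.X := M.d.restrictScalars k

/-- `(x_1,…,x_n)·M` as a `k`-subspace. -/
noncomputable def IMk : Submodule k M.X := M.IM.restrictScalars k

/-- The total homology `ₛH(M) = ker d^s / im d^{p-s}` as a `k`-vector space. -/
noncomputable abbrev H (s : ℕ) : Type :=
  ↥(LinearMap.ker (M.dk ^ s)) ⧸
    (LinearMap.range (M.dk ^ (p - s))).comap (LinearMap.ker (M.dk ^ s)).subtype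

/-- The total homology `ₛH(M ⊗_A k)` as a `k`-vector space, presented as the subquotient
`ker(d̄^s) / im(d̄^{p-s})` of `M/IM` pulled back to `M`. -/
noncomputable abbrev HBar (s : ℕ) : Type :=
  ↥(Submodule.comap (M.dk ^ s) M.IMk) ⧸
    (LinearMap.range (M.dk ^ (p - s)) ⊔ M.IMk).comap (Submodule.comap (M.dk ^ s) M.IMk).subtype

/-- `ₛH(M ⊗_A k) ≠ 0`. -/
def HBarNonzero (s : ℕ) : Prop :=
  ∃ x : M.X, (M.dk ^ s) x ∈ M.IMk ∧ x ∉ LinearMap.range (M.dk ^ (p - s)) ⊔ M.IMk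

end PDG

/-- The set of values `Σ_i dim_k ₁H_i(M ⊗_A k)` as `M` ranges over the finitely generated free
`p`-DG `A`-modules with `ₛH(M ⊗_A k) ≠ 0` and `dim_k ₛH(M) < ∞` for all `1 ≤ s ≤ p-1`;
`b_n` is its infimum. -/
def BSet (p n : ℕ) (k : Type) [Field k] : Set ℕ :=
  {v : ℕ | ∃ M : PDG p n k, M.IsFreeFG ∧
    (∀ s : ℕ, 1 ≤ s → s ≤ p - 1 → M.HBarNonzero s) ∧
    (∀ s : ℕ, 1 ≤ s → s ≤ p - 1 → FiniteDimensional k (M.H s)) ∧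
    v = Module.finrank k (M.HBar 1)}

/-! A complex `C` is stretched to a `p`-complex `V` by repeating its odd-degree terms `p - 1`
times; then `ker d / im d^(p-1)` of `V` is the homology of `C`, and for `0 < s < p` no
`ker d^s / im d^(p-s)` of `V` vanishes when `C` is not acyclic. With `g_i` the standard generators
of `(ℤ/p)ⁿ`, the operator `∑ x_i (g_i - 1) + d` on `A ⊗ V` has `p`-th power
`∑ x_i^p (g_i^p - 1) + d^p = 0`, and modulo the variables it reduces to `d`. So `A ⊗ V` is a
`p`-DG module whose reduction has the homology of `C`.

Its homology is finite-dimensional because each `x_j` acts nilpotently on it. Let `θ` extend, along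
a homogeneous basis, the derivation of the group algebra multiplying a group element by its `j`-th
coordinate, and put `T = ∑ x_i (g_i - 1)`. Then `[T, θ] = -x_j g_j` commutes with `T`, so
`ad T^(p-1) (θ^(p-1)) = (p-1)! [T, θ]^(p-1) = -[T, θ]^(p-1)`. On the other hand
`ad (T + d)^(p-1) (θ^(p-1))` is null-homotopic, and it differs from `ad T^(p-1) (θ^(p-1))` by an
endomorphism lowering the degree filtration of `V`, hence a nilpotent one. Therefore a power of
`x_j g_j`, and with it a power of `x_j`, acts as zero on homology.
-/

section Lie

open LieAlgebra

attribute [local instance] LieRing.ofAssociativeRing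

section Commutator

variable {A R : Type*} [CommRing A] [Ring R] [Algebra A R] {p : ℕ}

variable (A R p) in
lemma natCast_eq_zero_of_algebra [CharP A p] : (p : R) = 0 := by
  rw [← map_natCast (algebraMap A R), CharP.cast_eq_zero, map_zero]

lemma add_pow_prime_of_commute [Fact p.Prime] (hR : (p : R) = 0) {x y : R} (h : Commute x y) :
    (x + y) ^ p = x ^ p + y ^ p := by
  obtain ⟨r, hr⟩ := h.exists_add_pow_prime_eq (Fact.out : p.Prime)
  simp [hr, hR]

lemma sum_pow_prime [Fact p.Prime] (hR : (p : R) = 0) {ι : Type*} (s : Finset ι) (f : ι → R)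
    (hf : ∀ i j, Commute (f i) (f j)) : (∑ i ∈ s, f i) ^ p = ∑ i ∈ s, f i ^ p := by
  classical
  induction s using Finset.induction_on with
  | empty => simp [(Fact.out : p.Prime).ne_zero]
  | insert a s ha ih =>
    rw [Finset.sum_insert ha, Finset.sum_insert ha,
      add_pow_prime_of_commute hR (Commute.sum_right s f (f a) fun j _ ↦ hf a j), ih]

lemma sum_smul_lie {ι : Type*} (s : Finset ι) (a : ι → A) (f : ι → R) (x : R) :
    ⁅∑ i ∈ s, a i • f i, x⁆ = ∑ i ∈ s, a i • ⁅f i, x⁆ := by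
  rw [sum_lie]
  exact Finset.sum_congr rfl fun i _ ↦ smul_lie _ _ _

variable (A) in
lemma ad_pow_prime_eq_zero [Fact p.Prime] [CharP A p] {D : R} (hD : D ^ p = 0) :
    ad A R D ^ p = 0 := by
  rw [ad_eq_lmul_left_sub_lmul_right, Pi.sub_apply, sub_eq_add_neg,
    add_pow_prime_of_commute (natCast_eq_zero_of_algebra A (Module.End A R) p)
      (LinearMap.commute_mulLeft_right D D).neg_right,
    neg_pow, LinearMap.pow_mulLeft, LinearMap.pow_mulRight, hD]
  simp

lemma ad_pow_succ_apply (D x : R) (m : ℕ) :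
    (ad A R D ^ (m + 1)) x = ⁅D, (ad A R D ^ m) x⁆ := by
  rw [pow_succ', Module.End.mul_apply, ad_apply]

lemma lie_mul_eq (D x y : R) : ⁅D, x * y⁆ = ⁅D, x⁆ * y + x * ⁅D, y⁆ := by
  simp only [LieRing.of_associative_ring_bracket]
  noncomm_ring

lemma ad_pow_succ_mul {D θ : R} (h : ⁅D, ⁅D, θ⁆⁆ = 0) (w : R) (m : ℕ) :
    (ad A R D ^ (m + 1)) (θ * w) =
      θ * (ad A R D ^ (m + 1)) w + (m + 1) • (⁅D, θ⁆ * (ad A R D ^ m) w) := by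
  induction m with
  | zero => simp [lie_mul_eq, add_comm]
  | succ m ih =>
    rw [ad_pow_succ_apply, ih, lie_add, lie_mul_eq, lie_nsmul, lie_mul_eq, h,
      ad_pow_succ_apply D w (m + 1), ad_pow_succ_apply D w m, succ_nsmul _ (m + 1)]
    simp only [zero_mul, zero_add]
    abel

lemma ad_pow_pow_self {D θ : R} (h : ⁅D, ⁅D, θ⁆⁆ = 0) (m : ℕ) :
    (ad A R D ^ m) (θ ^ m) = m.factorial • ⁅D, θ⁆ ^ m := by
  suffices (ad A R D ^ m) (θ ^ m) = m.factorial • ⁅D, θ⁆ ^ m ∧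
      (ad A R D ^ (m + 1)) (θ ^ m) = 0 from this.1
  induction m with
  | zero => simp [LieRing.of_associative_ring_bracket]
  | succ m ih =>
    rw [pow_succ' θ, ad_pow_succ_mul h, ad_pow_succ_mul h, ad_pow_succ_apply _ _ (m + 1), ih.1,
      ih.2]
    simp only [mul_zero, smul_zero, add_zero, zero_add, lie_zero, mul_smul_comm,
      Nat.factorial_succ, mul_smul, pow_succ', and_self]

lemma natCast_factorial_pred_prime [Fact p.Prime] (hR : (p : R) = 0) :
    ((p - 1).factorial : R) = -1 := by
  have h : (p : ℤ) ∣ (p - 1).factorial + 1 := by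
    rw [← ZMod.intCast_zmod_eq_zero_iff_dvd]
    simp
  obtain ⟨a, ha⟩ := h
  have := congrArg (Int.cast : ℤ → R) ha
  push_cast [hR] at this
  rw [eq_neg_iff_add_eq_zero, this, zero_mul]

lemma ad_pow_pow_pred_prime [Fact p.Prime] [CharP A p] {D θ : R} (h : ⁅D, ⁅D, θ⁆⁆ = 0) :
    (ad A R D ^ (p - 1)) (θ ^ (p - 1)) = -⁅D, θ⁆ ^ (p - 1) := by
  rw [ad_pow_pow_self h, nsmul_eq_mul,
    natCast_factorial_pred_prime (natCast_eq_zero_of_algebra A R p), neg_one_mul]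

end Commutator

section Filtration

variable {A M : Type*} [CommRing A] [AddCommGroup M] [Module A M]

/-- The endomorphisms lowering the degree of the increasing filtration `F` by at least `r`. -/
def lowering (F : ℤ → Submodule A M) (r : ℤ) : Submodule A (Module.End A M) where
  carrier := {f | ∀ m, ∀ x ∈ F m, f x ∈ F (m - r)}
  add_mem' hf hg m x hx := add_mem (hf m x hx) (hg m x hx)
  zero_mem' _ _ _ := zero_mem _
  smul_mem' a _ hf m x hx := Submodule.smul_mem _ a (hf m x hx)

variable {F : ℤ → Submodule A M}

lemma mul_mem_lowering {r t : ℤ} {f g : Module.End A M} (hf : f ∈ lowering F r)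
    (hg : g ∈ lowering F t) : f * g ∈ lowering F (r + t) := by
  intro m x hx
  rw [add_comm, ← sub_sub]
  exact hf _ _ (hg m x hx)

lemma lie_mem_lowering {r t : ℤ} {f g : Module.End A M} (hf : f ∈ lowering F r)
    (hg : g ∈ lowering F t) : ⁅f, g⁆ ∈ lowering F (r + t) :=
  sub_mem (mul_mem_lowering hf hg) (add_comm t r ▸ mul_mem_lowering hg hf)

lemma pow_mem_lowering {r : ℤ} {f : Module.End A M} (hf : f ∈ lowering F r) (N : ℕ) :
    f ^ N ∈ lowering F (N * r) := by
  induction N with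
  | zero => intro m x hx; simpa using hx
  | succ N ih =>
    rw [pow_succ, Nat.cast_succ, add_one_mul]
    exact mul_mem_lowering ih hf

lemma lowering_antitone (hF : Monotone F) : Antitone (lowering F) :=
  fun _ _ h _ hf m x hx ↦ hF (by lia) (hf m x hx)

lemma isNilpotent_of_mem_lowering_one (hF : Monotone F) {lo hi : ℤ} (hlo : F lo = ⊥)
    (hhi : F hi = ⊤) {f : Module.End A M} (hf : f ∈ lowering F 1) : IsNilpotent f := by
  refine ⟨(hi - lo).toNat, LinearMap.ext fun x ↦ ?_⟩
  have hx : x ∈ F (max hi lo) := hF (le_max_left hi lo) (hhi ▸ Submodule.mem_top)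
  have := pow_mem_lowering hf (hi - lo).toNat _ x hx
  rwa [show max hi lo - (hi - lo).toNat * 1 = lo by lia, hlo] at this

lemma ad_pow_mem_lowering_zero {D h : Module.End A M} (hD : D ∈ lowering F 0)
    (hh : h ∈ lowering F 0) (r : ℕ) : (ad A (Module.End A M) D ^ r) h ∈ lowering F 0 := by
  induction r with
  | zero => exact hh
  | succ r ih => exact ad_pow_succ_apply (A := A) D h r ▸ lie_mem_lowering hD ih

lemma ad_add_pow_sub_ad_pow_mem_lowering_one (hF : Monotone F) {D d h : Module.End A M}
    (hD : D ∈ lowering F 0) (hd : d ∈ lowering F 1) (hh : h ∈ lowering F 0) (r : ℕ) :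
    (ad A (Module.End A M) (D + d) ^ r) h - (ad A (Module.End A M) D ^ r) h ∈ lowering F 1 := by
  induction r with
  | zero => simp
  | succ r ih =>
    have hDd : D + d ∈ lowering F 0 := add_mem hD (lowering_antitone hF zero_le_one hd)
    rw [ad_pow_succ_apply, ad_pow_succ_apply, add_lie, add_sub_right_comm, ← lie_sub]
    exact add_mem (lie_mem_lowering (r := 0) hD ih)
      (lie_mem_lowering (t := 0) hd (ad_pow_mem_lowering_zero hDd hh r))

end Filtration

section Homotopy

variable {A M : Type*} [CommRing A] [AddCommGroup M] [Module A M]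

lemma ker_le_comap_ker_of_commute {f g : Module.End A M} (h : Commute f g) :
    LinearMap.ker g ≤ (LinearMap.ker g).comap f := fun x hx ↦ by
  rw [Submodule.mem_comap, LinearMap.mem_ker, ← Module.End.mul_apply, ← h.eq,
    Module.End.mul_apply, hx, map_zero]

lemma range_le_comap_range_of_commute {f g : Module.End A M} (h : Commute f g) :
    LinearMap.range g ≤ (LinearMap.range g).comap f := by
  rintro _ ⟨y, rfl⟩
  exact ⟨f y, by rw [← Module.End.mul_apply, ← h.eq, Module.End.mul_apply]⟩

-- For `r = p - 1` this says that `ad D ^ (p - 1) h` is null-homotopic as a map of `p`-complexes.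
lemma ad_pow_apply_mem_range (D h : Module.End A M) {r s q : ℕ} (hsq : s + q = r + 1) {x : M}
    (hx : (D ^ s) x = 0) : (ad A (Module.End A M) D ^ r) h x ∈ LinearMap.range (D ^ q) := by
  induction r generalizing s q x with
  | zero =>
    obtain rfl | rfl : s = 0 ∨ q = 0 := by lia
    · simp_all
    · simp
  | succ r ih =>
    rw [ad_pow_succ_apply, LieRing.of_associative_ring_bracket, LinearMap.sub_apply]
    refine sub_mem ?_ ?_
    · obtain _ | q := q
      · simp
      · obtain ⟨y, hy⟩ := ih (q := q) (by lia) hx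
        exact ⟨y, by rw [Module.End.mul_apply, ← hy, pow_succ', Module.End.mul_apply]⟩
    · obtain _ | s := s
      · simp_all
      · exact ih (s := s) (by lia) (x := D x) (by rw [← Module.End.mul_apply, ← pow_succ, hx])

lemma pow_apply_sub_pow_apply_mem {K B : Submodule A M} {u e : Module.End A M}
    (he : K ≤ K.comap e) (hB : B ≤ B.comap (e - u)) (hu : K ≤ B.comap u) {x : M} (hx : x ∈ K)
    (N : ℕ) : (e ^ N) x - ((e - u) ^ N) x ∈ B := by
  have hK (N : ℕ) : (e ^ N) x ∈ K := by
    induction N with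
    | zero => exact hx
    | succ N ih => exact pow_succ' e N ▸ he ih
  induction N with
  | zero => simp
  | succ N ih =>
    convert B.add_mem (hB ih) (hu (hK N)) using 1
    simp only [pow_succ', Module.End.mul_apply, LinearMap.sub_apply, map_sub]
    abel

variable {p : ℕ} [Fact p.Prime] [CharP A p]

theorem exists_lie_pow_apply_mem_range {F : ℤ → Submodule A M} (hF : Monotone F) {lo hi : ℤ}
    (hlo : F lo = ⊥) (hhi : F hi = ⊤) {D d θ : Module.End A M} (hD : D ∈ lowering F 0)
    (hd : d ∈ lowering F 1) (hθ : θ ∈ lowering F 0) (hpow : (D + d) ^ p = 0)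
    (hDθ : Commute D ⁅D, θ⁆) (hdθ : Commute d ⁅D, θ⁆) {s q : ℕ} (hsq : s + q = p) :
    ∃ N : ℕ, ∀ x ∈ LinearMap.ker ((D + d) ^ s),
      (⁅D, θ⁆ ^ N) x ∈ LinearMap.range ((D + d) ^ q) := by
  have hp : p - 1 + 1 = p := Nat.sub_add_cancel (Fact.out : p.Prime).one_le
  let u := (ad A (Module.End A M) (D + d) ^ (p - 1)) (θ ^ (p - 1))
  let e := -⁅D, θ⁆ ^ (p - 1)
  have hu : Commute u (D + d) := by
    rw [Commute.symm_iff, commute_iff_lie_eq, ← ad_pow_succ_apply, hp, ad_pow_prime_eq_zero A hpow,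
      LinearMap.zero_apply]
  have he : Commute e (D + d) := ((hDθ.add_left hdθ).pow_right _).neg_right.symm
  have heu : IsNilpotent (e - u) := by
    refine isNilpotent_of_mem_lowering_one hF hlo hhi ?_
    have he' : e = (ad A (Module.End A M) D ^ (p - 1)) (θ ^ (p - 1)) :=
      (ad_pow_pow_pred_prime (commute_iff_lie_eq.mp hDθ)).symm
    rw [← neg_sub, he']
    have hθ' : θ ^ (p - 1) ∈ lowering F 0 := by simpa using pow_mem_lowering hθ (p - 1)
    exact neg_mem (ad_add_pow_sub_ad_pow_mem_lowering_one hF hD hd hθ' _)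
  obtain ⟨N, hN⟩ := heu
  refine ⟨(p - 1) * N, fun x hx ↦ ?_⟩
  have hmem := pow_apply_sub_pow_apply_mem
    (ker_le_comap_ker_of_commute (he.pow_right s))
    (range_le_comap_range_of_commute ((he.sub_left hu).pow_right q))
    (fun y hy ↦ ad_pow_apply_mem_range (D + d) _ (hsq.trans hp.symm) hy) hx N
  rw [hN, LinearMap.zero_apply, sub_zero, neg_pow, ← pow_mul] at hmem
  obtain h | h := neg_one_pow_eq_or (Module.End A M) N
  · simpa [h] using hmem
  · simpa [h] using hmem

end Homotopy

end Lie

section FiniteDimension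

open MvPolynomial

variable {σ k : Type*} [Finite σ] [CommRing k]

lemma finite_quotient_of_X_pow_mem {J : Ideal (MvPolynomial σ k)}
    (hJ : ∀ j, ∃ N : ℕ, X j ^ N ∈ J) : Module.Finite k (MvPolynomial σ k ⧸ J) := by
  have htop : Algebra.adjoin k (Ideal.Quotient.mkₐ k J '' Set.range X) = ⊤ := by
    rw [← AlgHom.map_adjoin, adjoin_range_X, Algebra.map_top, AlgHom.range_eq_top]
    exact Ideal.Quotient.mkₐ_surjective k J
  have hfg := fg_adjoin_of_finite (R := k)
    ((Set.finite_range (X : σ → MvPolynomial σ k)).image (Ideal.Quotient.mkₐ k J)) (by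
      rintro _ ⟨_, ⟨j, rfl⟩, rfl⟩
      obtain ⟨N, hN⟩ := hJ j
      refine IsIntegral.of_pow (n := N + 1) N.succ_pos ?_
      rw [← map_pow, Ideal.Quotient.mkₐ_eq_mk,
        Ideal.Quotient.eq_zero_iff_mem.mpr
          (pow_succ (X j : MvPolynomial σ k) N ▸ J.mul_mem_right _ hN)]
      exact isIntegral_zero)
  rw [htop] at hfg
  exact ⟨hfg⟩

variable {M : Type*} [AddCommGroup M] [Module (MvPolynomial σ k) M] [Module k M]
  [IsScalarTower k (MvPolynomial σ k) M] [Module.Finite (MvPolynomial σ k) M]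

lemma finite_of_X_pow_smul_eq_zero
    (h : ∀ j, ∃ N : ℕ, ∀ x : M, (X j : MvPolynomial σ k) ^ N • x = 0) : Module.Finite k M := by
  let J := Module.annihilator (MvPolynomial σ k) M
  have hJ : Module.IsTorsionBySet (MvPolynomial σ k) M J :=
    fun x a ↦ Module.mem_annihilator.mp a.2 x
  let _ : Module (MvPolynomial σ k ⧸ J) M := hJ.module
  have : IsScalarTower (MvPolynomial σ k) (MvPolynomial σ k ⧸ J) M := hJ.isScalarTower
  have : IsScalarTower k (MvPolynomial σ k ⧸ J) M := hJ.isScalarTower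
  have : Module.Finite (MvPolynomial σ k ⧸ J) M :=
    Module.Finite.of_restrictScalars_finite (MvPolynomial σ k) _ M
  have : Module.Finite k (MvPolynomial σ k ⧸ J) := finite_quotient_of_X_pow_mem fun j ↦
    (h j).imp fun _ hN ↦ Module.mem_annihilator.mpr hN
  exact Module.Finite.trans (MvPolynomial σ k ⧸ J) M

lemma finite_subquotient_of_X_pow_smul_mem [IsNoetherianRing k]
    (K B : Submodule (MvPolynomial σ k) M)
    (h : ∀ j, ∃ N : ℕ, ∀ x ∈ K, (X j : MvPolynomial σ k) ^ N • x ∈ B) :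
    Module.Finite k (↥(K.restrictScalars k) ⧸
      (B.restrictScalars k).comap (K.restrictScalars k).subtype) := by
  have : Module.Finite k (↥K ⧸ B.comap K.subtype) := by
    refine finite_of_X_pow_smul_eq_zero fun j ↦ (h j).imp fun N hN x ↦ ?_
    obtain ⟨y, rfl⟩ := Submodule.Quotient.mk_surjective _ x
    rw [← Submodule.Quotient.mk_smul, Submodule.Quotient.mk_eq_zero]
    exact hN y y.2
  exact Module.Finite.equiv (Submodule.Quotient.restrictScalarsEquiv k (B.comap K.subtype)).symm

end FiniteDimension

section HomogeneousBasis

variable {R V ι κ : Type*} [Ring R] [AddCommGroup V] [Module R V]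

lemma isInternal_span_basis [DecidableEq κ] (b : Module.Basis ι R V) (deg : ι → κ) :
    DirectSum.IsInternal fun m ↦ Submodule.span R (b '' (deg ⁻¹' {m})) := by
  rw [DirectSum.isInternal_submodule_iff_iSupIndep_and_iSup_eq_top]
  constructor
  · rw [iSupIndep_def]
    intro m
    have h : ⨆ j, ⨆ (_ : j ≠ m), Submodule.span R (b '' (deg ⁻¹' {j})) ≤
        Submodule.span R (b '' (deg ⁻¹' {m}ᶜ)) :=
      iSup₂_le fun j hj ↦ Submodule.span_mono (Set.image_mono fun i hi ↦ by simp_all)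
    exact (b.linearIndependent.disjoint_span_image
      (Disjoint.preimage deg disjoint_compl_right)).mono_right h
  · rw [← Submodule.span_iUnion, ← Set.image_iUnion, ← Set.preimage_iUnion,
      Set.iUnion_of_singleton, Set.preimage_univ, Set.image_univ, b.span_eq]

lemma eq_span_of_homogeneous_basis [DecidableEq κ] {𝓥 : κ → Submodule R V}
    (h𝓥 : DirectSum.IsInternal 𝓥) (b : Module.Basis ι R V) {deg : ι → κ}
    (hb : ∀ a, b a ∈ 𝓥 (deg a)) (m : κ) : 𝓥 m = Submodule.span R (b '' (deg ⁻¹' {m})) := by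
  have hle (m : κ) : Submodule.span R (b '' (deg ⁻¹' {m})) ≤ 𝓥 m := by
    rw [Submodule.span_le]
    rintro _ ⟨a, rfl, rfl⟩
    exact hb a
  exact congrFun ((h𝓥.submodule_iSupIndep.le_iff_eq_of_iSup_eq_top
    (isInternal_span_basis b deg).submodule_iSup_eq_top).mp hle).symm m

lemma exists_homogeneous_basis.{u, v} {k : Type*} {V : Type u} {κ : Type v} [Field k]
    [AddCommGroup V] [Module k V] [DecidableEq κ] {𝓥 : κ → Submodule k V}
    (h𝓥 : DirectSum.IsInternal 𝓥) :
    ∃ (ι : Type (max u v)) (deg : ι → κ) (b : Module.Basis ι k V), ∀ a, b a ∈ 𝓥 (deg a) :=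
  ⟨_, Sigma.fst, h𝓥.collectedBasis fun i ↦ Module.Basis.ofVectorSpace k (𝓥 i),
    h𝓥.collectedBasis_mem _⟩

end HomogeneousBasis

section Subquotient

variable {k V W : Type*} [Ring k] [AddCommGroup V] [Module k V] [AddCommGroup W] [Module k W]

/-- The isomorphism `K / (B ∩ K) ≃ K' / (B' ∩ K')` of subquotients induced by a linear map sending
`K` onto `K'` and detecting membership in `B` on `K`. -/
noncomputable def subquotientEquiv (f : V →ₗ[k] W) {K B : Submodule k V} {K' B' : Submodule k W}
    (hK : K.map f = K') (hB : ∀ x ∈ K, x ∈ B ↔ f x ∈ B') :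
    (K ⧸ B.comap K.subtype) ≃ₗ[k] (K' ⧸ B'.comap K'.subtype) := by
  have hf : ∀ x ∈ K, f x ∈ K' := fun x hx ↦ hK ▸ Submodule.mem_map_of_mem hx
  refine LinearEquiv.ofBijective ((B.comap K.subtype).mapQ (B'.comap K'.subtype) (f.restrict hf)
    fun x hx ↦ (hB x x.2).mp hx) ⟨?_, ?_⟩
  · rw [injective_iff_map_eq_zero]
    intro x hx
    obtain ⟨y, rfl⟩ := Submodule.Quotient.mk_surjective _ x
    have hy : f y ∈ B' := (Submodule.Quotient.mk_eq_zero (B'.comap K'.subtype)).mp hx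
    exact (Submodule.Quotient.mk_eq_zero _).mpr ((hB y y.2).mpr hy)
  · intro z
    obtain ⟨⟨z, hz⟩, rfl⟩ := Submodule.Quotient.mk_surjective _ z
    obtain ⟨y, hy, rfl⟩ := hK.symm ▸ hz
    exact ⟨Submodule.Quotient.mk ⟨y, hy⟩, rfl⟩

end Subquotient

section TensorGrading

open scoped TensorProduct

variable {k V W ι κ μ : Type*} [Field k] [AddCommGroup V] [Module k V] [AddCommGroup W]
  [Module k W]

/-- The grading of `V ⊗ W` induced by gradings `𝓥` and `𝓦`: the tensors of elements of degrees `i`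
and `j` have degree `φ i j`. -/
def tensorGrading (φ : ι → κ → μ) (𝓥 : ι → Submodule k V) (𝓦 : κ → Submodule k W) (m : μ) :
    Submodule k (V ⊗[k] W) :=
  ⨆ (i) (j) (_ : φ i j = m), Submodule.map₂ (TensorProduct.mk k V W) (𝓥 i) (𝓦 j)

variable {φ : ι → κ → μ} {𝓥 : ι → Submodule k V} {𝓦 : κ → Submodule k W}

lemma tensorGrading_le_iff {m : μ} {N : Submodule k (V ⊗[k] W)} :
    tensorGrading φ 𝓥 𝓦 m ≤ N ↔
      ∀ i j, φ i j = m → ∀ v ∈ 𝓥 i, ∀ w ∈ 𝓦 j, v ⊗ₜ w ∈ N := by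
  simp only [tensorGrading, iSup_le_iff, Submodule.map₂_le, TensorProduct.mk_apply]

lemma tmul_mem_tensorGrading {i : ι} {j : κ} {v : V} {w : W} (hv : v ∈ 𝓥 i) (hw : w ∈ 𝓦 j) :
    v ⊗ₜ w ∈ tensorGrading φ 𝓥 𝓦 (φ i j) :=
  tensorGrading_le_iff.mp le_rfl i j rfl v hv w hw

lemma isInternal_tensorGrading [DecidableEq ι] [DecidableEq κ] [DecidableEq μ]
    (h𝓥 : DirectSum.IsInternal 𝓥) (h𝓦 : DirectSum.IsInternal 𝓦) :
    DirectSum.IsInternal (tensorGrading φ 𝓥 𝓦) := by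
  obtain ⟨_, deg, b, hb⟩ := exists_homogeneous_basis h𝓥
  obtain ⟨_, deg', c, hc⟩ := exists_homogeneous_basis h𝓦
  have hspan : tensorGrading φ 𝓥 𝓦 = fun m ↦
      Submodule.span k (b.tensorProduct c '' ((fun a ↦ φ (deg a.1) (deg' a.2)) ⁻¹' {m})) := by
    funext m
    refine le_antisymm ?_ (Submodule.span_le.mpr ?_)
    · simp only [tensorGrading, iSup_le_iff, eq_span_of_homogeneous_basis h𝓥 b hb,
        eq_span_of_homogeneous_basis h𝓦 c hc, Submodule.map₂_span_span]
      rintro _ _ rfl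
      refine Submodule.span_mono ?_
      rintro _ ⟨_, ⟨a, rfl, rfl⟩, _, ⟨a', rfl, rfl⟩, rfl⟩
      exact ⟨(a, a'), rfl, Module.Basis.tensorProduct_apply b c a a'⟩
    · rintro _ ⟨⟨a, a'⟩, rfl, rfl⟩
      rw [Module.Basis.tensorProduct_apply]
      exact tmul_mem_tensorGrading (hb a) (hc a')
  rw [hspan]
  exact isInternal_span_basis _ _

end TensorGrading

section CoordinateDerivation

variable {p n : ℕ} {k : Type} [Field k]

/-- A group element as a unit of the group algebra. -/
noncomputable def singleUnit (a : Fin n → ZMod p) : (GroupRing p n k)ˣ where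
  val := .single a 1
  inv := .single (-a) 1
  val_inv := by simp [AddMonoidAlgebra.single_mul_single, AddMonoidAlgebra.one_def]
  inv_val := by simp [AddMonoidAlgebra.single_mul_single, AddMonoidAlgebra.one_def]

variable [CharP k p]

lemma single_sub_one_pow_prime [Fact p.Prime] (a : Fin n → ZMod p) :
    ((.single a 1 - 1 : GroupRing p n k)) ^ p = 0 := by
  have : CharP (GroupRing p n k) p :=
    charP_of_injective_algebraMap (FaithfulSMul.algebraMap_injective k _) p
  rw [sub_pow_char, AddMonoidAlgebra.single_pow, one_pow, one_pow, AddMonoidAlgebra.one_def,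
    sub_eq_zero]
  congr 1
  ext i
  simp

/-- The derivation of the group algebra `k[(ℤ/p)ⁿ]` multiplying a group element by its `j`-th
coordinate. -/
noncomputable def coordDer (p n : ℕ) (k : Type) [Field k] [CharP k p] (j : Fin n) :
    GroupRing p n k →ₗ[k] GroupRing p n k :=
  (Finsupp.lsum k fun a ↦ ZMod.castHom dvd_rfl k (a j) • AddMonoidAlgebra.lsingle a) ∘ₗ
    (AddMonoidAlgebra.coeffLinearEquiv k).toLinearMap

lemma coordDer_single (j : Fin n) (a : Fin n → ZMod p) (c : k) :
    coordDer p n k j (.single a c) =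
      ZMod.castHom dvd_rfl k (a j) • AddMonoidAlgebra.single a c := by
  simp [coordDer]

lemma coordDer_one (j : Fin n) : coordDer p n k j 1 = 0 := by
  rw [AddMonoidAlgebra.one_def, coordDer_single, Pi.zero_apply, map_zero, zero_smul]

lemma coordDer_mul (j : Fin n) (x y : GroupRing p n k) :
    coordDer p n k j (x * y) = coordDer p n k j x * y + x * coordDer p n k j y := by
  induction x using AddMonoidAlgebra.induction_linear with
  | zero => simp
  | add x x' hx hx' => rw [add_mul, map_add, hx, hx', map_add]; ring
  | single a c =>
    induction y using AddMonoidAlgebra.induction_linear with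
    | zero => simp
    | add y y' hy hy' => rw [mul_add, map_add, hy, hy', map_add]; ring
    | single b e =>
      rw [AddMonoidAlgebra.single_mul_single, coordDer_single, coordDer_single, coordDer_single,
        smul_mul_assoc, mul_smul_comm, AddMonoidAlgebra.single_mul_single, ← add_smul,
        Pi.add_apply, map_add]

lemma coordDer_single_sub_one (i j : Fin n) :
    coordDer p n k j (.single (Pi.single i 1) 1 - 1) =
      if i = j then .single (Pi.single j 1) 1 else 0 := by
  rw [map_sub, coordDer_one, sub_zero, coordDer_single]
  split_ifs with h
  · rw [h, Pi.single_eq_same, map_one, one_smul]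
  · rw [Pi.single_eq_of_ne (Ne.symm h), map_zero, zero_smul]

variable {ι X : Type*} [AddCommGroup X] [Module (GroupRing p n k) X] [Module k X]
  [IsScalarTower k (GroupRing p n k) X] (b : Module.Basis ι (GroupRing p n k) X)

/-- The extension of the derivation `coordDer` to a free module killing the given basis. -/
noncomputable def basisDer (j : Fin n) : Module.End k X :=
  (b.repr.symm.toLinearMap.restrictScalars k) ∘ₗ
    Finsupp.mapRange.linearMap (coordDer p n k j) ∘ₗ (b.repr.toLinearMap.restrictScalars k)

lemma repr_basisDer (j : Fin n) (x : X) (a : ι) :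
    b.repr (basisDer b j x) a = coordDer p n k j (b.repr x a) := by
  simp [basisDer]

lemma basisDer_smul (j : Fin n) (c : GroupRing p n k) (x : X) :
    basisDer b j (c • x) = coordDer p n k j c • x + c • basisDer b j x := by
  refine b.ext_elem fun a ↦ ?_
  simp [repr_basisDer, coordDer_mul]

lemma basisDer_self (j : Fin n) (a : ι) : basisDer b j (b a) = 0 := by
  classical
  refine b.ext_elem fun a' ↦ ?_
  rw [repr_basisDer, b.repr_self, Finsupp.single_apply]
  split_ifs <;> simp [coordDer_one]

lemma basisDer_mem_span (j : Fin n) (s : Set ι) {x : X}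
    (hx : x ∈ Submodule.span (GroupRing p n k) (b '' s)) :
    basisDer b j x ∈ Submodule.span (GroupRing p n k) (b '' s) := by
  induction hx using Submodule.span_induction with
  | mem x hx =>
    obtain ⟨a, -, rfl⟩ := hx
    rw [basisDer_self]
    exact zero_mem _
  | zero => rw [map_zero]; exact zero_mem _
  | add x y _ _ hx hy => rw [map_add]; exact add_mem hx hy
  | smul c x hx hx' =>
    rw [basisDer_smul]
    exact add_mem (Submodule.smul_mem _ _ hx) (Submodule.smul_mem _ _ hx')

end CoordinateDerivation

namespace KGCx

variable {p n N : ℕ} {k : Type} [Field k] (C : KGCx p n k N)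

/-- The projection to the component of degree `i`. -/
noncomputable def proj (i : ℤ) : C.X →ₗ[GroupRing p n k] C.X :=
  letI := C.internal.chooseDecomposition
  (C.gr i).subtype ∘ₗ DirectSum.component _ _ _ i ∘ₗ
    (DirectSum.decomposeLinearEquiv C.gr).toLinearMap

lemma proj_mem (i : ℤ) (x : C.X) : C.proj i x ∈ C.gr i := Submodule.coe_mem _

lemma proj_of_mem {i : ℤ} {x : C.X} (hx : x ∈ C.gr i) : C.proj i x = x :=
  let := C.internal.chooseDecomposition
  DirectSum.decompose_of_mem_same C.gr hx

lemma proj_of_mem_ne {i j : ℤ} {x : C.X} (hx : x ∈ C.gr i) (hij : i ≠ j) : C.proj j x = 0 :=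
  let := C.internal.chooseDecomposition
  DirectSum.decompose_of_mem_ne C.gr hx hij

lemma mem_of_proj_mem {x : C.X} {S : Submodule k C.X} (h : ∀ i, C.proj i x ∈ S) : x ∈ S := by
  classical
  let := C.internal.chooseDecomposition
  rw [← DirectSum.sum_support_decompose C.gr x]
  exact sum_mem fun i _ ↦ h i

lemma proj_d (i : ℤ) (x : C.X) : C.proj i (C.d x) = C.d (C.proj (i + 1) x) := by
  let := C.internal.chooseDecomposition
  induction x using DirectSum.Decomposition.inductionOn C.gr with
  | zero => simp
  | @homogeneous j x =>
    by_cases h : j = i + 1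
    · subst h
      rw [C.proj_of_mem x.2, C.proj_of_mem (by simpa using C.d_deg _ _ x.2)]
    · rw [C.proj_of_mem_ne x.2 h, map_zero, C.proj_of_mem_ne (C.d_deg _ _ x.2) (by lia)]
  | add x y hx hy => simp only [map_add, hx, hy]

variable {C} in
lemma d_proj_eq_zero {x : C.X} (hx : C.d x = 0) (i : ℤ) : C.d (C.proj i x) = 0 := by
  rw [← sub_add_cancel i 1, ← proj_d, hx, map_zero]

lemma d_pow_mem {i : ℤ} {x : C.X} (hx : x ∈ C.gr i) (r : ℕ) : (C.d ^ r) x ∈ C.gr (i - r) := by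
  induction r with
  | zero => simpa using hx
  | succ r ih =>
    rw [pow_succ', Module.End.mul_apply, Nat.cast_succ, ← sub_sub]
    exact C.d_deg _ _ ih

lemma dk_pow (s : ℕ) : C.dk ^ s = (C.d ^ s).restrictScalars k := by
  induction s with
  | zero => rfl
  | succ s ih => rw [pow_succ', pow_succ', ih]; rfl

variable {C} in
lemma NonAcyclic.exists_mem_gr (h : C.NonAcyclic) :
    ∃ i, ∃ x ∈ C.gr i, C.d x = 0 ∧ x ∉ LinearMap.range C.dk := by
  obtain ⟨x, hx, hx'⟩ := h
  by_contra! H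
  exact hx' (C.mem_of_proj_mem (S := LinearMap.range C.dk)
    fun i ↦ H i _ (C.proj_mem i x) (d_proj_eq_zero hx i))

variable {C} in
lemma IsPerfect.finite [NeZero p] (h : C.IsPerfect) : Module.Finite k C.X := by
  obtain ⟨ι, _, -, b, -⟩ := h
  have := Module.Finite.of_basis b
  have : Module.Finite k (GroupRing p n k) :=
    Module.Finite.equiv (AddMonoidAlgebra.coeffLinearEquiv k).symm
  exact Module.Finite.trans (GroupRing p n k) C.X

end KGCx

namespace PDG

variable {p n : ℕ} {k : Type} [Field k] (M : PDG p n k)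

lemma dk_pow (s : ℕ) : M.dk ^ s = (M.d ^ s).restrictScalars k := by
  induction s with
  | zero => rfl
  | succ s ih => rw [pow_succ', pow_succ', ih]; rfl

end PDG

section DegreeFiltration

open scoped TensorProduct

variable {R V : Type*} [CommRing R] [AddCommGroup V] [Module R V]

/-- The increasing filtration attached to a `ℤ`-indexed family of submodules. -/
def degreeFiltration (𝓥 : ℤ → Submodule R V) (m : ℤ) : Submodule R V := ⨆ i ≤ m, 𝓥 i

variable {𝓥 : ℤ → Submodule R V}

lemma degreeFiltration_mono : Monotone (degreeFiltration 𝓥) :=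
  fun _ _ h ↦ biSup_mono fun _ hi ↦ hi.trans h

lemma mem_lowering_degreeFiltration {f : Module.End R V} {r : ℤ}
    (hf : ∀ m, ∀ v ∈ 𝓥 m, f v ∈ 𝓥 (m - r)) : f ∈ lowering (degreeFiltration 𝓥) r := by
  intro m
  change degreeFiltration 𝓥 m ≤ (degreeFiltration 𝓥 (m - r)).comap f
  exact iSup₂_le fun i hi v hv ↦
    Submodule.mem_iSup_of_mem (i - r) (Submodule.mem_iSup_of_mem (by lia) (hf i v hv))

lemma exists_degreeFiltration_eq_bot_eq_top [IsNoetherian R V] (h𝓥 : DirectSum.IsInternal 𝓥) :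
    ∃ lo hi, degreeFiltration 𝓥 lo = ⊥ ∧ degreeFiltration 𝓥 hi = ⊤ := by
  have hfin : {i | 𝓥 i ≠ ⊥}.Finite :=
    WellFoundedGT.finite_ne_bot_of_iSupIndep h𝓥.submodule_iSupIndep
  obtain ⟨lo, hlo⟩ := hfin.bddBelow
  obtain ⟨hi, hhi⟩ := hfin.bddAbove
  refine ⟨lo - 1, hi, ?_, ?_⟩
  · refine iSup₂_eq_bot.mpr fun i hi ↦ ?_
    by_contra h
    have := hlo h
    lia
  · rw [eq_top_iff, ← h𝓥.submodule_iSup_eq_top]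
    refine iSup_le fun i ↦ ?_
    by_cases h : 𝓥 i = ⊥
    · exact h ▸ bot_le
    · exact le_iSup₂_of_le i (hhi h) le_rfl

variable (A : Type*) [CommRing A] [Algebra R A]

lemma baseChange_mem_lowering {F : ℤ → Submodule R V} {f : Module.End R V} {r : ℤ}
    (hf : f ∈ lowering F r) : f.baseChange A ∈ lowering (fun m ↦ (F m).baseChange A) r := by
  intro m
  change (F m).baseChange A ≤ ((F (m - r)).baseChange A).comap (f.baseChange A)
  rw [Submodule.baseChange_eq_span, Submodule.span_le]
  rintro _ ⟨v, hv, rfl⟩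
  exact Submodule.tmul_mem_baseChange_of_mem 1 (hf m v hv)

end DegreeFiltration

namespace KGCx

open scoped TensorProduct

variable {p n N : ℕ} {k : Type} [Field k] (C : KGCx p n k N)

lemma isInternal_restrictScalars_gr :
    DirectSum.IsInternal fun i ↦ (C.gr i).restrictScalars k := C.internal

/-- The action of an element of the group algebra as a `k`-linear map. -/
noncomputable abbrev act : GroupRing p n k →ₐ[k] Module.End k C.X := Algebra.lsmul k k C.X

lemma act_mem (a : GroupRing p n k) (m : ℤ) : ∀ x ∈ C.gr m, C.act a x ∈ C.gr (m - 0) :=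
  fun _ hx ↦ (sub_zero m).symm ▸ Submodule.smul_mem _ a hx

/-- Extension of scalars of `k`-linear endomorphisms to the polynomial ring. -/
noncomputable abbrev extend :
    Module.End k C.X →ₐ[k] Module.End (PolyA n k) (PolyA n k ⊗[k] C.X) :=
  Module.End.baseChangeHom k (PolyA n k) C.X

lemma commute_dk_act (a : GroupRing p n k) : Commute C.dk (C.act a) :=
  LinearMap.ext fun x ↦ C.d.map_smul a x

/-- The twisting endomorphism `∑ x_i (g_i - 1)` of `A ⊗ C`, where the `g_i` are the standard
generators of `(ℤ/p)ⁿ`. -/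
noncomputable def twist : Module.End (PolyA n k) (PolyA n k ⊗[k] C.X) :=
  ∑ i, (MvPolynomial.X i : PolyA n k) • C.extend (C.act (.single (Pi.single i 1) 1 - 1))

/-- The differential `∑ x_i (g_i - 1) + d` of `A ⊗ C`. -/
noncomputable def twistedD : Module.End (PolyA n k) (PolyA n k ⊗[k] C.X) :=
  C.twist + C.extend C.dk

lemma commute_twist_extend {f : Module.End k C.X} (hf : ∀ a, Commute (C.act a) f) :
    Commute C.twist (C.extend f) :=
  Commute.sum_left _ _ _ fun _ _ ↦ ((hf _).map C.extend).smul_left _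

lemma commute_twistedD_extend {f : Module.End k C.X} (hf : ∀ a, Commute (C.act a) f)
    (hd : Commute C.dk f) : Commute C.twistedD (C.extend f) :=
  (C.commute_twist_extend hf).add_left (hd.map C.extend)

lemma twist_pow_prime [Fact p.Prime] [CharP k p] : C.twist ^ p = 0 := by
  have hcomm (a b : GroupRing p n k) : Commute (C.extend (C.act a)) (C.extend (C.act b)) :=
    ((Commute.all a b).map C.act).map C.extend
  have hsum := sum_pow_prime (natCast_eq_zero_of_algebra (PolyA n k) _ p) Finset.univ
    (fun i ↦ (MvPolynomial.X i : PolyA n k) • C.extend (C.act (.single (Pi.single i 1) 1 - 1)))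
    fun i j ↦ ((hcomm _ _).smul_left _).smul_right _
  refine hsum.trans (Finset.sum_eq_zero fun i _ ↦ ?_)
  rw [smul_pow, ← map_pow, ← map_pow, single_sub_one_pow_prime, map_zero, map_zero, smul_zero]

lemma twistedD_pow_prime [Fact p.Prime] [CharP k p] (hN : C.d ^ p = 0) : C.twistedD ^ p = 0 := by
  have hadd := add_pow_prime_of_commute (R := Module.End (PolyA n k) (PolyA n k ⊗[k] C.X))
    (natCast_eq_zero_of_algebra (PolyA n k) _ p)
    (C.commute_twist_extend fun a ↦ (C.commute_dk_act a).symm)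
  have hd : C.dk ^ p = 0 := by rw [dk_pow, hN]; rfl
  rw [twistedD, hadd, C.twist_pow_prime, zero_add, ← map_pow, hd, map_zero]

/-- The grading of `A ⊗ C` in which `x_i` has degree `-1`. -/
noncomputable def twistedGr : ℤ → Submodule k (PolyA n k ⊗[k] C.X) :=
  tensorGrading (fun (i : ℕ) (j : ℤ) ↦ j - i) (MvPolynomial.homogeneousSubmodule (Fin n) k)
    fun j ↦ (C.gr j).restrictScalars k

lemma tmul_mem_twistedGr {a : PolyA n k} {i : ℕ} (ha : a.IsHomogeneous i) {j : ℤ} {x : C.X}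
    (hx : x ∈ C.gr j) : a ⊗ₜ x ∈ C.twistedGr (j - i) :=
  tmul_mem_tensorGrading (𝓥 := MvPolynomial.homogeneousSubmodule (Fin n) k)
    (𝓦 := fun j ↦ (C.gr j).restrictScalars k) ha hx

lemma isInternal_twistedGr : DirectSum.IsInternal C.twistedGr :=
  letI := MvPolynomial.gradedAlgebra (σ := Fin n) (R := k)
  isInternal_tensorGrading (DirectSum.Decomposition.isInternal _) C.isInternal_restrictScalars_gr

lemma X_smul_mem_twistedGr (i : Fin n) (m : ℤ) :
    ∀ t ∈ C.twistedGr m, (MvPolynomial.X i : PolyA n k) • t ∈ C.twistedGr (m - 1) := by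
  change C.twistedGr m ≤
    (C.twistedGr (m - 1)).comap (Algebra.lsmul k k _ (MvPolynomial.X i : PolyA n k))
  refine tensorGrading_le_iff.mpr ?_
  rintro r j rfl a ha x hx
  rw [sub_sub, ← Nat.cast_one (R := ℤ), ← Nat.cast_add, add_comm r 1]
  exact C.tmul_mem_twistedGr ((MvPolynomial.isHomogeneous_X k i).mul ha) hx

lemma extend_mem_twistedGr {f : Module.End k C.X} {r : ℤ}
    (hf : ∀ m, ∀ x ∈ C.gr m, f x ∈ C.gr (m - r)) (m : ℤ) :
    ∀ t ∈ C.twistedGr m, C.extend f t ∈ C.twistedGr (m - r) := by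
  change C.twistedGr m ≤ (C.twistedGr (m - r)).comap ((C.extend f).restrictScalars k)
  refine tensorGrading_le_iff.mpr ?_
  rintro i j rfl a ha x hx
  rw [sub_right_comm]
  exact C.tmul_mem_twistedGr ha (hf j x hx)

lemma twistedD_mem_twistedGr (m : ℤ) :
    ∀ t ∈ C.twistedGr m, C.twistedD t ∈ C.twistedGr (m - 1) := by
  intro t ht
  rw [twistedD, twist, LinearMap.add_apply, LinearMap.sum_apply]
  refine add_mem (sum_mem fun i _ ↦ C.X_smul_mem_twistedGr i m _ ?_)
    (C.extend_mem_twistedGr C.d_deg m t ht)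
  simpa only [sub_zero] using C.extend_mem_twistedGr (C.act_mem _) m t ht

/-- The extension to `A ⊗ C` of the filtration of `C` by degree. -/
noncomputable def extendedFiltration (m : ℤ) : Submodule (PolyA n k) (PolyA n k ⊗[k] C.X) :=
  (degreeFiltration (fun i ↦ (C.gr i).restrictScalars k) m).baseChange (PolyA n k)

lemma extendedFiltration_mono : Monotone C.extendedFiltration := fun i j h ↦ by
  rw [extendedFiltration, extendedFiltration, Submodule.baseChange_eq_span,
    Submodule.baseChange_eq_span]
  exact Submodule.span_mono (Submodule.map_mono (degreeFiltration_mono h))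

lemma exists_extendedFiltration_eq_bot_eq_top [Module.Finite k C.X] :
    ∃ lo hi, C.extendedFiltration lo = ⊥ ∧ C.extendedFiltration hi = ⊤ := by
  obtain ⟨lo, hi, hlo, hhi⟩ :=
    exists_degreeFiltration_eq_bot_eq_top C.isInternal_restrictScalars_gr
  refine ⟨lo, hi, ?_, ?_⟩
  · rw [extendedFiltration, hlo, Submodule.baseChange_bot]
  · rw [extendedFiltration, hhi, Submodule.baseChange_top]

lemma extend_mem_lowering {f : Module.End k C.X} {r : ℤ}
    (hf : ∀ m, ∀ x ∈ C.gr m, f x ∈ C.gr (m - r)) :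
    C.extend f ∈ lowering C.extendedFiltration r :=
  baseChange_mem_lowering (PolyA n k) (mem_lowering_degreeFiltration hf)

lemma twist_mem_lowering : C.twist ∈ lowering C.extendedFiltration 0 :=
  sum_mem fun _ _ ↦ Submodule.smul_mem _ _ (C.extend_mem_lowering (C.act_mem _))

variable [Fact p.Prime] [CharP k p] (V : KGCx p n k p)

/-- The twisted `p`-DG module `A ⊗ V` with differential `∑ x_i (g_i - 1) + d`. -/
noncomputable def toPDG : PDG p n k where
  X := PolyA n k ⊗[k] V.X
  d := V.twistedD
  gr := V.twistedGr
  internal := V.isInternal_twistedGr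
  x_deg := V.X_smul_mem_twistedGr
  d_deg := V.twistedD_mem_twistedGr
  d_pow := V.twistedD_pow_prime V.d_pow

lemma isFreeFG_toPDG [Module.Finite k V.X] : V.toPDG.IsFreeFG := by
  obtain ⟨ι, deg, b, hb⟩ := exists_homogeneous_basis V.isInternal_restrictScalars_gr
  have := Module.Finite.finite_basis b
  refine ⟨ι, Fintype.ofFinite ι, deg, Algebra.TensorProduct.basis (PolyA n k) b, fun a ↦ ?_⟩
  have h := V.tmul_mem_twistedGr (MvPolynomial.isHomogeneous_one (Fin n) k) (hb a)
  rw [Nat.cast_zero, sub_zero] at h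
  exact (Algebra.TensorProduct.basis_apply (A := PolyA n k) b a).symm ▸ h

section Finiteness

attribute [local instance] LieRing.ofAssociativeRing

variable {V} {ι : Type} (b : Module.Basis ι (GroupRing p n k) V.X)

lemma lie_act_basisDer (j : Fin n) (a : GroupRing p n k) :
    ⁅V.act a, basisDer b j⁆ = -V.act (coordDer p n k j a) := by
  ext x
  have h := basisDer_smul b j a x
  change a • basisDer b j x - basisDer b j (a • x) = -(coordDer p n k j a • x)
  rw [h, sub_add_cancel_right]

lemma lie_twist_extend_basisDer (j : Fin n) :
    ⁅V.twist, V.extend (basisDer b j)⁆ =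
      (MvPolynomial.X j : PolyA n k) • V.extend (-V.act (.single (Pi.single j 1) 1)) := by
  have key (i : Fin n) :
      ⁅V.extend (V.act (.single (Pi.single i 1) 1 - 1)), V.extend (basisDer b j)⁆ =
        V.extend (-V.act (if i = j then .single (Pi.single j 1) 1 else 0)) := by
    rw [← coordDer_single_sub_one, ← lie_act_basisDer b]
    have h := map_sub V.extend (V.act (.single (Pi.single i 1) 1 - 1) * basisDer b j)
      (basisDer b j * V.act (.single (Pi.single i 1) 1 - 1))
    rw [map_mul, map_mul] at h
    exact h.symm
  refine (sum_smul_lie (A := PolyA n k) (R := Module.End (PolyA n k) (PolyA n k ⊗[k] V.X))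
    _ _ _ _).trans ?_
  rw [Finset.sum_congr rfl fun i _ ↦ congrArg _ (key i), Finset.sum_eq_single j, if_pos rfl]
  · intro i _ hij
    rw [if_neg hij, map_zero, neg_zero, map_zero, smul_zero]
  · simp

lemma exists_lie_twist_pow_apply_mem_range (hV : V.IsPerfect) (j : Fin n) {s q : ℕ}
    (hsq : s + q = p) :
    ∃ N : ℕ, ∀ x ∈ LinearMap.ker (V.twistedD ^ s),
      (((MvPolynomial.X j : PolyA n k) • V.extend (-V.act (.single (Pi.single j 1) 1))) ^ N) x ∈
        LinearMap.range (V.twistedD ^ q) := by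
  have := hV.finite
  obtain ⟨ι, _, deg, b, hb⟩ := hV
  obtain ⟨lo, hi, hlo, hhi⟩ := V.exists_extendedFiltration_eq_bot_eq_top
  have hθ (m : ℤ) (x : V.X) (hx : x ∈ V.gr m) : basisDer b j x ∈ V.gr (m - 0) := by
    rw [eq_span_of_homogeneous_basis V.internal b hb] at hx ⊢
    rw [sub_zero]
    exact basisDer_mem_span b j _ hx
  have hcommTwist : Commute V.twist ⁅V.twist, V.extend (basisDer b j)⁆ := by
    rw [lie_twist_extend_basisDer]
    exact (V.commute_twist_extend
      fun a ↦ ((Commute.all _ _).map V.act).neg_right).smul_right _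
  have hcommD : Commute (V.extend V.dk) ⁅V.twist, V.extend (basisDer b j)⁆ := by
    rw [lie_twist_extend_basisDer]
    exact ((V.commute_dk_act _).neg_right.map V.extend).smul_right _
  rw [← lie_twist_extend_basisDer b]
  exact exists_lie_pow_apply_mem_range V.extendedFiltration_mono hlo hhi V.twist_mem_lowering
    (V.extend_mem_lowering V.d_deg) (V.extend_mem_lowering hθ)
    (V.twistedD_pow_prime V.d_pow) hcommTwist hcommD hsq

lemma exists_X_pow_smul_mem_range (hV : V.IsPerfect) (j : Fin n) {s q : ℕ} (hsq : s + q = p) :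
    ∃ N : ℕ, ∀ x ∈ LinearMap.ker (V.twistedD ^ s),
      (MvPolynomial.X j : PolyA n k) ^ N • x ∈ LinearMap.range (V.twistedD ^ q) := by
  obtain ⟨N, hN⟩ := exists_lie_twist_pow_apply_mem_range hV j hsq
  let g : (GroupRing p n k)ˣ := singleUnit (Pi.single j 1)
  have hinv : V.extend (-V.act ↑g⁻¹) * V.extend (-V.act ↑g) = 1 := by
    rw [← map_mul, neg_mul_neg, ← map_mul, Units.inv_mul, map_one, map_one]
  have hcomm : Commute (V.extend (-V.act ↑g⁻¹)) (V.extend (-V.act ↑g)) :=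
    (((Commute.all _ _).map V.act).neg_left.neg_right).map V.extend
  have hcomm' : Commute (V.extend (-V.act ↑g⁻¹)) V.twistedD :=
    (V.commute_twistedD_extend (fun a ↦ ((Commute.all _ _).map V.act).neg_right)
      (V.commute_dk_act _).neg_right).symm
  refine ⟨N, fun x hx ↦ ?_⟩
  have := range_le_comap_range_of_commute ((hcomm'.pow_left N).pow_right q) (hN x hx)
  rwa [Submodule.mem_comap, smul_pow, LinearMap.smul_apply, map_smul, ← Module.End.mul_apply,
    show AddMonoidAlgebra.single (Pi.single j 1) 1 = (g : GroupRing p n k) from rfl,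
    ← hcomm.mul_pow, hinv, one_pow, Module.End.one_apply] at this

lemma finite_H_toPDG (h : V.IsPerfect) {s : ℕ} (hs : s ≤ p) :
    Module.Finite k (V.toPDG.H s) := by
  have := h.finite
  have : Module.Finite (PolyA n k) V.toPDG.X :=
    inferInstanceAs (Module.Finite (PolyA n k) (PolyA n k ⊗[k] V.X))
  unfold PDG.H
  rw [PDG.dk_pow, PDG.dk_pow]
  exact finite_subquotient_of_X_pow_smul_mem (LinearMap.ker (V.toPDG.d ^ s))
    (LinearMap.range (V.toPDG.d ^ (p - s)))
    fun j ↦ exists_X_pow_smul_mem_range h j (Nat.add_sub_of_le hs)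

end Finiteness

end KGCx

section Reduction

open scoped TensorProduct

variable {σ k V : Type*} [CommRing k] [AddCommGroup V] [Module k V]

lemma sub_algebraMap_aeval_zero_mem (a : MvPolynomial σ k) :
    a - algebraMap k _ (MvPolynomial.aeval (0 : σ → k) a) ∈
      Ideal.span (Set.range (MvPolynomial.X : σ → MvPolynomial σ k)) := by
  induction a using MvPolynomial.induction_on with
  | C c => simp [← MvPolynomial.algebraMap_eq]
  | add a b ha hb =>
    rw [map_add, map_add, add_sub_add_comm]
    exact add_mem ha hb
  | mul_X a i _ =>
    simpa using Ideal.mul_mem_left _ a (Ideal.subset_span (Set.mem_range_self i))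

/-- The reduction `A ⊗ V → V` modulo the variables of the polynomial ring `A`. -/
noncomputable def reduce (σ k V : Type*) [CommRing k] [AddCommGroup V] [Module k V] :
    MvPolynomial σ k ⊗[k] V →ₗ[k] V :=
  TensorProduct.lid k V ∘ₗ
    (MvPolynomial.aeval (0 : σ → k) : MvPolynomial σ k →ₐ[k] k).toLinearMap.rTensor V

lemma reduce_tmul (a : MvPolynomial σ k) (v : V) :
    reduce σ k V (a ⊗ₜ v) = MvPolynomial.aeval (0 : σ → k) a • v := by
  simp [reduce]

lemma reduce_one_tmul (v : V) : reduce σ k V (1 ⊗ₜ v) = v := by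
  rw [reduce_tmul, map_one, one_smul]

lemma reduce_smul (a : MvPolynomial σ k) (t : MvPolynomial σ k ⊗[k] V) :
    reduce σ k V (a • t) = MvPolynomial.aeval (0 : σ → k) a • reduce σ k V t := by
  induction t with
  | zero => simp
  | tmul b v => simp [TensorProduct.smul_tmul', reduce_tmul, mul_smul]
  | add s t hs ht => simp [hs, ht]

lemma reduce_baseChange (f : Module.End k V) (t : MvPolynomial σ k ⊗[k] V) :
    reduce σ k V (f.baseChange (MvPolynomial σ k) t) = f (reduce σ k V t) := by
  induction t with
  | zero => simp
  | tmul a v => simp [reduce_tmul]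
  | add s t hs ht => simp only [map_add, hs, ht]

lemma reduce_eq_zero_iff (t : MvPolynomial σ k ⊗[k] V) :
    reduce σ k V t = 0 ↔
      t ∈ Ideal.span (Set.range (MvPolynomial.X : σ → MvPolynomial σ k)) •
        (⊤ : Submodule (MvPolynomial σ k) (MvPolynomial σ k ⊗[k] V)) := by
  constructor
  · have key : t - 1 ⊗ₜ reduce σ k V t ∈
        Ideal.span (Set.range (MvPolynomial.X : σ → MvPolynomial σ k)) •
          (⊤ : Submodule (MvPolynomial σ k) (MvPolynomial σ k ⊗[k] V)) := by
      induction t with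
      | zero => simp
      | tmul a v =>
        convert Submodule.smul_mem_smul (sub_algebraMap_aeval_zero_mem a)
          (Submodule.mem_top (x := (1 : MvPolynomial σ k) ⊗ₜ[k] v)) using 1
        rw [reduce_tmul, sub_smul, TensorProduct.smul_tmul', smul_eq_mul, mul_one,
          algebraMap_smul, TensorProduct.tmul_smul]
      | add s t hs ht =>
        rw [map_add, TensorProduct.tmul_add, add_sub_add_comm]
        exact add_mem hs ht
    intro h
    rwa [h, TensorProduct.tmul_zero, sub_zero] at key
  · intro ht
    induction ht using Submodule.smul_induction_on' with
    | smul a ha t _ =>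
      have hle : Ideal.span (Set.range (MvPolynomial.X : σ → MvPolynomial σ k)) ≤
          RingHom.ker (MvPolynomial.aeval (0 : σ → k)) := by
        rw [Ideal.span_le]
        rintro _ ⟨i, rfl⟩
        simp
      have ha' : MvPolynomial.aeval (0 : σ → k) a = 0 := hle ha
      rw [reduce_smul, ha', zero_smul]
    | add s _ t _ hs ht => rw [map_add, hs, ht, add_zero]

end Reduction

namespace KGCx

open scoped TensorProduct

variable {p n N : ℕ} {k : Type} [Field k]

lemma reduce_twistedD (C : KGCx p n k N) (t : PolyA n k ⊗[k] C.X) :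
    reduce (Fin n) k C.X (C.twistedD t) = C.dk (reduce (Fin n) k C.X t) := by
  rw [twistedD, twist, LinearMap.add_apply, map_add, LinearMap.sum_apply, map_sum,
    Finset.sum_eq_zero, zero_add]
  · exact reduce_baseChange C.dk t
  · intro i _
    rw [LinearMap.smul_apply, reduce_smul, MvPolynomial.aeval_X, Pi.zero_apply, zero_smul]

lemma reduce_twistedD_pow (C : KGCx p n k N) (s : ℕ) (t : PolyA n k ⊗[k] C.X) :
    reduce (Fin n) k C.X ((C.twistedD ^ s) t) = (C.dk ^ s) (reduce (Fin n) k C.X t) := by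
  induction s with
  | zero => rfl
  | succ s ih =>
    rw [pow_succ', Module.End.mul_apply, reduce_twistedD, ih, pow_succ', Module.End.mul_apply]

variable [Fact p.Prime] [CharP k p] (V : KGCx p n k p)

/-- The reduction map `reduce` as a map defined on the `p`-DG module `V.toPDG`. -/
noncomputable def reducePDG : V.toPDG.X →ₗ[k] V.X := reduce (Fin n) k V.X

lemma reducePDG_surjective : Function.Surjective V.reducePDG :=
  fun v ↦ ⟨(1 : PolyA n k) ⊗ₜ[k] v, reduce_one_tmul v⟩

lemma reducePDG_dk_pow (s : ℕ) (t : V.toPDG.X) :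
    V.reducePDG ((V.toPDG.dk ^ s) t) = (V.dk ^ s) (V.reducePDG t) := by
  rw [PDG.dk_pow]
  exact V.reduce_twistedD_pow s t

lemma mem_IMk_toPDG_iff (t : V.toPDG.X) : t ∈ V.toPDG.IMk ↔ V.reducePDG t = 0 :=
  (reduce_eq_zero_iff (σ := Fin n) (k := k) (V := V.X) t).symm

lemma dk_pow_mem_IMk_toPDG_iff (s : ℕ) (t : V.toPDG.X) :
    (V.toPDG.dk ^ s) t ∈ V.toPDG.IMk ↔ (V.dk ^ s) (V.reducePDG t) = 0 := by
  rw [mem_IMk_toPDG_iff, reducePDG_dk_pow]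

lemma mem_range_sup_IMk_toPDG_iff (q : ℕ) (t : V.toPDG.X) :
    t ∈ LinearMap.range (V.toPDG.dk ^ q) ⊔ V.toPDG.IMk ↔
      V.reducePDG t ∈ LinearMap.range (V.dk ^ q) := by
  rw [Submodule.mem_sup]
  constructor
  · rintro ⟨_, ⟨z, rfl⟩, w, hw, rfl⟩
    refine ⟨V.reducePDG z, ?_⟩
    rw [map_add, reducePDG_dk_pow, (V.mem_IMk_toPDG_iff w).mp hw, add_zero]
  · rintro ⟨v, hv⟩
    obtain ⟨z, rfl⟩ := V.reducePDG_surjective v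
    refine ⟨_, ⟨z, rfl⟩, t - (V.toPDG.dk ^ q) z, ?_, add_sub_cancel _ _⟩
    rw [mem_IMk_toPDG_iff, map_sub, reducePDG_dk_pow, hv, sub_self]

lemma hBarNonzero_toPDG {s : ℕ} {v : V.X} (hv : (V.dk ^ s) v = 0)
    (hv' : v ∉ LinearMap.range (V.dk ^ (p - s))) : V.toPDG.HBarNonzero s := by
  obtain ⟨t, rfl⟩ := V.reducePDG_surjective v
  exact ⟨t, (V.dk_pow_mem_IMk_toPDG_iff s t).mpr hv,
    mt (V.mem_range_sup_IMk_toPDG_iff _ t).mp hv'⟩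

/-- The total homology `ker d^s / im d^(p-s)` of a `p`-complex. -/
noncomputable abbrev pHomology (s : ℕ) : Type :=
  LinearMap.ker (V.dk ^ s) ⧸
    (LinearMap.range (V.dk ^ (p - s))).comap (LinearMap.ker (V.dk ^ s)).subtype

/-- The homology of the reduction of `A ⊗ V` modulo the variables is that of `V`. -/
noncomputable def hBarEquiv (s : ℕ) : V.toPDG.HBar s ≃ₗ[k] V.pHomology s :=
  subquotientEquiv V.reducePDG
    (by
      rw [← Submodule.map_comap_eq_of_surjective V.reducePDG_surjective (LinearMap.ker (V.dk ^ s))]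
      congr 1
      ext t
      exact V.dk_pow_mem_IMk_toPDG_iff s t)
    fun t _ ↦ V.mem_range_sup_IMk_toPDG_iff (p - s) t

end KGCx

/-- The monotone map `ℤ → ℤ` sending `p * q` to `2 * q` and `p * q + r`, `0 < r < p`,
to `2 * q + 1`. It describes how a complex is stretched to a `p`-complex. -/
def stretch (p : ℕ) (m : ℤ) : ℤ := 2 * (m / p) + if m % p = 0 then 0 else 1

section stretch

variable {p : ℕ}

lemma stretch_mul (hp : 0 < p) (q : ℤ) : stretch p (p * q) = 2 * q := by
  have : (p : ℤ) ≠ 0 := by lia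
  simp [stretch, Int.mul_ediv_cancel_left _ this]

lemma stretch_mul_add {r : ℤ} (h0 : 0 < r) (hr : r < p) (q : ℤ) :
    stretch p (p * q + r) = 2 * q + 1 := by
  have : (p : ℤ) ≠ 0 := by lia
  rw [stretch, add_comm (p * q : ℤ), Int.add_mul_ediv_left _ _ this, Int.add_mul_emod_self_left,
    Int.ediv_eq_zero_of_lt h0.le hr, Int.emod_eq_of_lt h0.le hr, if_neg h0.ne']
  lia

lemma stretch_add_self (hp : 0 < p) (m : ℤ) : stretch p (m + p) = stretch p m + 2 := by
  have : (p : ℤ) ≠ 0 := by lia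
  rw [stretch, stretch, Int.add_emod_right, Int.add_ediv_of_dvd_right dvd_rfl,
    Int.ediv_self this]
  lia

lemma stretch_add_one (hp : 1 < p) (m : ℤ) :
    stretch p (m + 1) = stretch p m ∨ stretch p (m + 1) = stretch p m + 1 := by
  have hp' : (0 : ℤ) < p := by lia
  obtain ⟨q, r, h0, hr, rfl⟩ : ∃ q r : ℤ, 0 ≤ r ∧ r < p ∧ m = p * q + r :=
    ⟨m / p, m % p, Int.emod_nonneg _ hp'.ne', Int.emod_lt_of_pos _ hp',
      (Int.mul_ediv_add_emod m p).symm⟩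
  rcases h0.eq_or_lt with rfl | h0
  · rw [add_zero, stretch_mul (by lia), stretch_mul_add one_pos (by lia)]
    exact .inr rfl
  · rw [stretch_mul_add h0 hr]
    rcases (Int.add_one_le_iff.mpr hr).eq_or_lt with h | h
    · rw [show (p : ℤ) * q + r + 1 = p * (q + 1) by rw [mul_add]; lia, stretch_mul (by lia)]
      lia
    · rw [add_assoc, stretch_mul_add (by lia) h]
      lia

lemma stretch_mono (hp : 1 < p) : Monotone (stretch p) :=
  monotone_int_of_le_succ fun m ↦ by have := stretch_add_one hp m; lia

lemma stretch_injOn (hp : 1 < p) :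
    Set.InjOn (stretch p) {m | stretch p (m - 1) ≠ stretch p m} := by
  intro m hm m' hm' h
  rw [Set.mem_ofPred_eq] at hm hm'
  have mono := stretch_mono hp
  rcases lt_trichotomy m m' with hlt | rfl | hlt
  · have := mono (show m ≤ m' - 1 by lia)
    have := mono (show m' - 1 ≤ m' by lia)
    lia
  · rfl
  · have := mono (show m' ≤ m - 1 by lia)
    have := mono (show m - 1 ≤ m by lia)
    lia

lemma stretch_add_sub_one (hp : 1 < p) {m : ℤ} (h : stretch p (m - 1) ≠ stretch p m) :
    stretch p (m + (p - 1 : ℕ)) = stretch p m + 1 := by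
  have h₁ := stretch_add_self (p := p) (by lia) (m - 1)
  have h₂ := stretch_add_one hp (m - 1)
  rw [sub_add_cancel] at h₂
  rw [show m + (p - 1 : ℕ) = m - 1 + p by lia]
  lia

lemma finite_stretch_preimage (hp : 0 < p) {s : Set ℤ} (hs : s.Finite) :
    (stretch p ⁻¹' s).Finite := by
  refine hs.preimage' fun i _ ↦
    (Set.finite_Ico (p * (i / 2) : ℤ) (p * (i / 2) + p)).subset fun m hm ↦ ?_
  have hq : i / 2 = m / p := by
    rw [← show stretch p m = i from hm, stretch]
    lia
  have hp' : (0 : ℤ) < p := by lia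
  have h₁ := Int.emod_nonneg m hp'.ne'
  have h₂ := Int.emod_lt_of_pos m hp'
  have h₃ := Int.mul_ediv_add_emod m p
  rw [hq, Set.mem_Ico]
  lia

lemma exists_stretch_eq {s : ℕ} (hs : 1 ≤ s) (hsp : s ≤ p - 1) (i : ℤ) :
    ∃ m, stretch p m = i ∧ stretch p (m - s) = i - 1 ∧ stretch p (m + (p - s : ℕ)) = i + 1 := by
  rcases Int.even_or_odd' i with ⟨q, rfl | rfl⟩
  · refine ⟨p * q, stretch_mul (by lia) q, ?_, stretch_mul_add (by lia) (by lia) q⟩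
    rw [show (p : ℤ) * q - s = p * (q - 1) + (p - s) by ring,
      stretch_mul_add (by lia) (by lia)]
    lia
  · refine ⟨p * q + s, stretch_mul_add (by lia) (by lia) q, ?_, ?_⟩
    · rw [add_sub_cancel_right, stretch_mul (by lia), add_sub_cancel_right]
    · rw [show (p : ℤ) * q + s + (p - s : ℕ) = p * (q + 1) by
        rw [mul_add, Nat.cast_sub (by lia)]; ring, stretch_mul (by lia)]
      lia

end stretch

/-- The exponent of the differential in the map from degree `m + r` to degree `m` of a stretched
complex. -/
def stretchExp (p r : ℕ) (m : ℤ) : ℕ := (stretch p (m + r) - stretch p m).toNat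

section stretchExp

variable {p : ℕ}

lemma stretchExp_zero (m : ℤ) : stretchExp p 0 m = 0 := by
  simp [stretchExp]

lemma stretchExp_eq_one {r : ℕ} {m : ℤ} (h : stretch p (m + r) = stretch p m + 1) :
    stretchExp p r m = 1 := by
  simp [stretchExp, h]

lemma coe_stretchExp (hp : 1 < p) (r : ℕ) (m : ℤ) :
    (stretchExp p r m : ℤ) = stretch p (m + r) - stretch p m :=
  Int.toNat_of_nonneg (sub_nonneg.mpr (stretch_mono hp (by lia)))

lemma stretchExp_add (hp : 1 < p) (r s : ℕ) (m : ℤ) :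
    stretchExp p (r + s) m = stretchExp p r m + stretchExp p s (m + r) := by
  have h₁ := coe_stretchExp hp r m
  have h₂ := coe_stretchExp hp s (m + r)
  have h₃ := coe_stretchExp hp (r + s) m
  rw [Nat.cast_add, ← add_assoc] at h₃
  lia

lemma stretchExp_self (hp : 1 < p) (m : ℤ) : stretchExp p p m = 2 := by
  have h := coe_stretchExp hp p m
  rw [stretch_add_self (by lia)] at h
  lia

end stretchExp

namespace KGCx

variable {p n : ℕ} {k : Type} [Field k] (C : KGCx p n k 2)

/-- The underlying module of the stretched complex: its component of degree `m` is the component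
of `C` of degree `stretch p m`. -/
def stretchedModule : Submodule (GroupRing p n k) (ℤ →₀ C.X) where
  carrier := {f | ∀ m, f m ∈ C.gr (stretch p m)}
  zero_mem' _ := zero_mem _
  add_mem' hf hg m := add_mem (hf m) (hg m)
  smul_mem' c _ hf m := Submodule.smul_mem _ c (hf m)

/-- The grading of the stretched complex. -/
def stretchedGr (m : ℤ) : Submodule (GroupRing p n k) C.stretchedModule where
  carrier := {f | ∀ j ≠ m, f.1 j = 0}
  zero_mem' _ _ := rfl
  add_mem' hf hg j hj := by
    rw [Submodule.coe_add, Finsupp.add_apply, hf j hj, hg j hj, add_zero]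
  smul_mem' c f hf j hj := by rw [Submodule.coe_smul, Finsupp.smul_apply, hf j hj, smul_zero]

variable {C}

lemma single_mem_stretchedModule {m : ℤ} {x : C.X} (hx : x ∈ C.gr (stretch p m)) :
    Finsupp.single m x ∈ C.stretchedModule := by
  intro j
  rw [Finsupp.single_apply]
  split_ifs with h
  · exact h ▸ hx
  · exact zero_mem _

/-- The element of the stretched complex concentrated in degree `m` with value `x`. -/
noncomputable def stretchedSingle {m : ℤ} {x : C.X} (hx : x ∈ C.gr (stretch p m)) :
    C.stretchedModule := ⟨.single m x, single_mem_stretchedModule hx⟩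

lemma coe_stretchedSingle {m : ℤ} {x : C.X} (hx : x ∈ C.gr (stretch p m)) :
    (stretchedSingle hx : ℤ →₀ C.X) = .single m x := rfl

lemma stretchedSingle_mem_stretchedGr {m : ℤ} {x : C.X} (hx : x ∈ C.gr (stretch p m)) :
    stretchedSingle hx ∈ C.stretchedGr m := fun _ hj ↦ Finsupp.single_eq_of_ne hj

lemma sum_stretchedSingle (f : C.stretchedModule) :
    ∑ m ∈ f.1.support, stretchedSingle (f.2 m) = f := by
  refine Subtype.ext ?_
  rw [Submodule.coe_sum]
  exact f.1.sum_single

variable (C)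

lemma isInternal_stretchedGr : DirectSum.IsInternal C.stretchedGr := by
  rw [DirectSum.isInternal_submodule_iff_iSupIndep_and_iSup_eq_top]
  constructor
  · refine fun m ↦ Submodule.disjoint_def.mpr fun f hf hf' ↦ ?_
    have hle : ⨆ j, ⨆ (_ : j ≠ m), C.stretchedGr j ≤
        LinearMap.ker (Finsupp.lapply m ∘ₗ C.stretchedModule.subtype) :=
      iSup₂_le fun j hj f hf ↦ hf m hj.symm
    ext j
    by_cases h : j = m
    · exact h ▸ hle hf'
    · exact hf j h
  · refine eq_top_iff.mpr fun f _ ↦ ?_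
    rw [← sum_stretchedSingle f]
    exact sum_mem fun m _ ↦ Submodule.mem_iSup_of_mem m (stretchedSingle_mem_stretchedGr (f.2 m))

lemma stretchedModule_eq_span {ι : Type} {deg : ι → ℤ}
    (b : Module.Basis ι (GroupRing p n k) C.X) (hb : ∀ a, b a ∈ C.gr (deg a)) :
    C.stretchedModule = Submodule.span _ (Set.range
      fun x : {x : Σ _ : ℤ, ι // deg x.2 = stretch p x.1} ↦ .single x.1.1 (b x.1.2)) := by
  refine le_antisymm (fun f hf ↦ ?_) (Submodule.span_le.mpr ?_)
  · rw [← f.sum_single]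
    refine sum_mem fun m _ ↦ ?_
    have hm : f m ∈ Submodule.span _ (b '' (deg ⁻¹' {stretch p m})) :=
      eq_span_of_homogeneous_basis C.internal b hb _ ▸ hf m
    have hle : (Submodule.span (GroupRing p n k) (b '' (deg ⁻¹' {stretch p m}))).map
        (Finsupp.lsingle m) ≤ Submodule.span _ (Set.range
          fun x : {x : Σ _ : ℤ, ι // deg x.2 = stretch p x.1} ↦ .single x.1.1 (b x.1.2)) := by
      rw [Submodule.map_span, Submodule.span_le]
      rintro _ ⟨_, ⟨a, ha, rfl⟩, rfl⟩
      exact Submodule.subset_span ⟨⟨⟨m, a⟩, ha⟩, rfl⟩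
    exact hle (Submodule.mem_map_of_mem hm)
  · rintro _ ⟨⟨⟨m, a⟩, ha⟩, rfl⟩
    exact single_mem_stretchedModule (ha ▸ hb a)

lemma exists_basis_stretchedModule (hp : 0 < p) (h : C.IsPerfect) :
    ∃ (ι : Type) (_ : Fintype ι) (deg : ι → ℤ)
      (b : Module.Basis ι (GroupRing p n k) C.stretchedModule),
        ∀ a, b a ∈ C.stretchedGr (deg a) := by
  obtain ⟨ι, _, deg, b, hb⟩ := h
  let ι' := {x : Σ _ : ℤ, ι // deg x.2 = stretch p x.1}
  have hli : LinearIndependent (GroupRing p n k)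
      fun x : ι' ↦ Finsupp.single x.1.1 (b x.1.2) := by
    have := (Finsupp.basis fun _ : ℤ ↦ b).linearIndependent.comp
      (Subtype.val : ι' → Σ _ : ℤ, ι) Subtype.val_injective
    rwa [Finsupp.coe_basis] at this
  have hfin : Finite ι' := by
    have : Finite (stretch p ⁻¹' Set.range deg) :=
      finite_stretch_preimage hp (Set.finite_range deg)
    refine Finite.of_injective
      (fun x : ι' ↦ ((⟨x.1.1, x.1.2, x.2⟩, x.1.2) : (stretch p ⁻¹' Set.range deg) × ι))
      fun x y h ↦ Subtype.ext (Sigma.ext (congrArg (·.1.1) h) (heq_of_eq (congrArg (·.2) h)))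
  let b' : Module.Basis ι' (GroupRing p n k) C.stretchedModule :=
    (Module.Basis.span hli).map (.ofEq _ _ (C.stretchedModule_eq_span b hb).symm)
  refine ⟨ι', .ofFinite _, fun x ↦ x.1.1, b', fun x j hj ↦ ?_⟩
  have hb' : (b' x : ℤ →₀ C.X) = .single x.1.1 (b x.1.2) :=
    congrArg Subtype.val (Module.Basis.span_apply hli x)
  rw [hb', Finsupp.single_eq_of_ne hj]

variable [Fact p.Prime]

/-- The maps of degree `-r` of the stretched complex given by powers of the differential. -/
noncomputable def stretchedPow (r : ℕ) : Module.End (GroupRing p n k) C.stretchedModule where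
  toFun f := ⟨.onFinset (f.1.support.image (· - (r : ℤ)))
    (fun m ↦ (C.d ^ stretchExp p r m) (f.1 (m + r))) fun m hm ↦ by
      refine Finset.mem_image.mpr ⟨m + r, Finsupp.mem_support_iff.mpr fun h ↦ hm ?_, by simp⟩
      rw [h, map_zero], fun m ↦ by
    have := C.d_pow_mem (f.2 (m + r)) (stretchExp p r m)
    rwa [coe_stretchExp (Fact.out : p.Prime).one_lt, sub_sub_cancel] at this⟩
  map_add' f g := by ext; simp
  map_smul' c f := by ext; simp

lemma stretchedPow_apply (r : ℕ) (f : C.stretchedModule) (m : ℤ) :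
    (C.stretchedPow r f).1 m = (C.d ^ stretchExp p r m) (f.1 (m + r)) := rfl

lemma stretchedPow_one_pow (r : ℕ) : C.stretchedPow 1 ^ r = C.stretchedPow r := by
  induction r with
  | zero =>
    ext f m
    rw [pow_zero, Module.End.one_apply, stretchedPow_apply, stretchExp_zero, pow_zero,
      Module.End.one_apply, Nat.cast_zero, add_zero]
  | succ r ih =>
    rw [pow_succ, ih]
    ext f m
    rw [Module.End.mul_apply, stretchedPow_apply, stretchedPow_apply, stretchedPow_apply,
      ← Module.End.mul_apply, ← pow_add,
      stretchExp_add (Fact.out : p.Prime).one_lt, Nat.cast_add, add_assoc]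

lemma stretchedPow_prime : C.stretchedPow p = 0 := by
  ext f m
  rw [stretchedPow_apply, stretchExp_self (Fact.out : p.Prime).one_lt, C.d_pow]
  rfl

/-- The `p`-complex obtained from a complex by repeating its terms of odd degree `p - 1` times,
the new differentials being identities. -/
noncomputable def stretched : KGCx p n k p where
  X := C.stretchedModule
  d := C.stretchedPow 1
  gr := C.stretchedGr
  internal := C.isInternal_stretchedGr
  d_deg m f hf j hj := by
    rw [stretchedPow_apply, hf _ (by lia), map_zero]
  d_pow := by rw [stretchedPow_one_pow, stretchedPow_prime]

lemma stretched_dk_pow (r : ℕ) : C.stretched.dk ^ r = (C.stretchedPow r).restrictScalars k := by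
  rw [dk_pow, ← stretchedPow_one_pow]
  rfl

variable {C}

lemma IsPerfect.stretched (h : C.IsPerfect) : C.stretched.IsPerfect :=
  C.exists_basis_stretchedModule (Fact.out : p.Prime).pos h

lemma coe_stretchedPow_stretchedSingle {m : ℤ} {x : C.X} (hx : x ∈ C.gr (stretch p m)) (r : ℕ) :
    (C.stretchedPow r (stretchedSingle hx)).1 =
      .single (m - r) ((C.d ^ stretchExp p r (m - r)) x) := by
  ext j
  rw [stretchedPow_apply, coe_stretchedSingle]
  by_cases h : m = j + r
  · rw [h, add_sub_cancel_right, Finsupp.single_eq_same, Finsupp.single_eq_same]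
  · rw [Finsupp.single_eq_of_ne' h, Finsupp.single_eq_of_ne (by lia), map_zero]

lemma stretchedPow_stretchedSingle_eq_zero {m : ℤ} {x : C.X} (hx : x ∈ C.gr (stretch p m))
    {r : ℕ} (hr : stretch p (m - r) = stretch p m - 1) (hd : C.d x = 0) :
    C.stretchedPow r (stretchedSingle hx) = 0 := by
  refine Subtype.ext ?_
  rw [coe_stretchedPow_stretchedSingle, stretchExp_eq_one (by rw [sub_add_cancel]; lia), pow_one,
    hd, Finsupp.single_zero, Submodule.coe_zero]

lemma NonAcyclic.exists_mem_ker_stretchedPow (h : C.NonAcyclic) {s : ℕ} (hs : 1 ≤ s)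
    (hsp : s ≤ p - 1) :
    ∃ f, C.stretchedPow s f = 0 ∧ f ∉ LinearMap.range (C.stretchedPow (p - s)) := by
  obtain ⟨i, x, hxi, hx, hx'⟩ := h.exists_mem_gr
  obtain ⟨m, rfl, hm₁, hm₂⟩ := exists_stretch_eq hs hsp i
  refine ⟨stretchedSingle hxi, stretchedPow_stretchedSingle_eq_zero hxi hm₁ hx, ?_⟩
  rintro ⟨f, hf⟩
  have hfm : (C.stretchedPow (p - s) f).1 m = x := by
    rw [hf, coe_stretchedSingle, Finsupp.single_eq_same]
  rw [stretchedPow_apply, stretchExp_eq_one hm₂, pow_one] at hfm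
  exact hx' ⟨_, hfm⟩

variable (C) in
/-- The sum of the values of an element of the stretched complex. -/
noncomputable def collapse : C.stretchedModule →ₗ[k] C.X :=
  (Finsupp.lsum ℕ fun _ : ℤ ↦ LinearMap.id (R := GroupRing p n k)).restrictScalars k ∘ₗ
    C.stretchedModule.subtype.restrictScalars k

lemma collapse_apply (f : C.stretchedModule) : C.collapse f = ∑ m ∈ f.1.support, f.1 m := rfl

lemma collapse_stretchedSingle {m : ℤ} {x : C.X} (hx : x ∈ C.gr (stretch p m)) :
    C.collapse (stretchedSingle hx) = x := Finsupp.sum_single_index rfl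

lemma d_apply_of_mem_ker {f : C.stretchedModule} (hf : C.stretchedPow 1 f = 0) (m : ℤ) :
    C.d (f.1 m) = 0 := by
  have h : (C.stretchedPow 1 f).1 (m - 1) = 0 := by rw [hf]; rfl
  rw [stretchedPow_apply, Nat.cast_one, sub_add_cancel] at h
  have he := coe_stretchExp (Fact.out : p.Prime).one_lt 1 (m - 1)
  have hm := stretch_add_one (Fact.out : p.Prime).one_lt (m - 1)
  rw [Nat.cast_one] at he
  have hle : stretchExp p 1 (m - 1) ≤ 1 := by lia
  rw [← pow_one C.d, ← Nat.sub_add_cancel hle, pow_add, Module.End.mul_apply, h, map_zero]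

lemma apply_eq_zero_of_mem_ker {f : C.stretchedModule} (hf : C.stretchedPow 1 f = 0) {m : ℤ}
    (hm : stretch p (m - 1) = stretch p m) : f.1 m = 0 := by
  have h : (C.stretchedPow 1 f).1 (m - 1) = 0 := by rw [hf]; rfl
  have he : stretchExp p 1 (m - 1) = 0 := by simp [stretchExp, hm]
  rwa [stretchedPow_apply, he, pow_zero, Module.End.one_apply, Nat.cast_one, sub_add_cancel] at h

lemma proj_collapse_of_mem_ker {f : C.stretchedModule} (hf : C.stretchedPow 1 f = 0) {m : ℤ}
    (hm : stretch p (m - 1) ≠ stretch p m) : C.proj (stretch p m) (C.collapse f) = f.1 m := by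
  rw [collapse_apply, map_sum, Finset.sum_eq_single m]
  · exact C.proj_of_mem (f.2 m)
  · intro j _ hjm
    by_cases hj : stretch p (j - 1) = stretch p j
    · rw [apply_eq_zero_of_mem_ker hf hj, map_zero]
    · exact C.proj_of_mem_ne (f.2 j) fun h ↦
        hjm (stretch_injOn (Fact.out : p.Prime).one_lt hj hm h)
  · intro h
    rw [Finsupp.notMem_support_iff.mp h, map_zero]

lemma stretchedSingle_mem_range {m : ℤ} (hm : stretch p (m - 1) ≠ stretch p m) {x : C.X}
    (hx : x ∈ C.gr (stretch p m)) (hx' : x ∈ LinearMap.range C.d) :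
    stretchedSingle hx ∈ LinearMap.range (C.stretchedPow (p - 1)) := by
  obtain ⟨y, rfl⟩ := hx'
  have hstretch := stretch_add_sub_one (Fact.out : p.Prime).one_lt hm
  have hy : C.proj (stretch p m + 1) y ∈ C.gr (stretch p (m + (p - 1 : ℕ))) :=
    hstretch ▸ C.proj_mem _ y
  refine ⟨stretchedSingle hy, Subtype.ext ?_⟩
  rw [coe_stretchedPow_stretchedSingle, coe_stretchedSingle, add_sub_cancel_right,
    stretchExp_eq_one hstretch, pow_one, ← proj_d, C.proj_of_mem hx]

lemma mem_range_stretchedPow_iff {f : C.stretchedModule} (hf : C.stretchedPow 1 f = 0) :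
    f ∈ LinearMap.range (C.stretchedPow (p - 1)) ↔ C.collapse f ∈ LinearMap.range C.d := by
  have hjump {m : ℤ} (hm : m ∈ f.1.support) : stretch p (m - 1) ≠ stretch p m :=
    fun h ↦ Finsupp.mem_support_iff.mp hm (apply_eq_zero_of_mem_ker hf h)
  constructor
  · intro h
    rw [collapse_apply]
    refine sum_mem fun m hm ↦ ?_
    obtain ⟨g, rfl⟩ := h
    rw [stretchedPow_apply, stretchExp_eq_one
      (stretch_add_sub_one (Fact.out : p.Prime).one_lt (hjump hm)), pow_one]
    exact ⟨_, rfl⟩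
  · rintro ⟨x, hx⟩
    rw [← sum_stretchedSingle f]
    refine sum_mem fun m hm ↦ stretchedSingle_mem_range (hjump hm) _ ?_
    rw [← proj_collapse_of_mem_ker hf (hjump hm), ← hx, proj_d]
    exact ⟨_, rfl⟩

variable (C)

lemma map_collapse_ker :
    (LinearMap.ker (C.stretchedPow 1) |>.restrictScalars k).map C.collapse =
      LinearMap.ker C.dk := by
  refine le_antisymm ?_ fun x hx ↦ C.mem_of_proj_mem fun i ↦ ?_
  · rintro _ ⟨f, hf, rfl⟩
    rw [collapse_apply]
    exact sum_mem fun m _ ↦ d_apply_of_mem_ker hf m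
  · have hp := (Fact.out : p.Prime).two_le
    obtain ⟨m, rfl, hm, -⟩ := exists_stretch_eq (p := p) le_rfl (by lia) i
    exact ⟨stretchedSingle (C.proj_mem _ x),
      stretchedPow_stretchedSingle_eq_zero _ hm (d_proj_eq_zero hx _), collapse_stretchedSingle _⟩

/-- The homology `ker d / im d^(p-1)` of the stretched complex is the homology of `C`. -/
noncomputable def stretchedHomologyEquiv : C.stretched.pHomology 1 ≃ₗ[k] C.TotalHomology :=
  subquotientEquiv C.collapse (by rw [stretched_dk_pow]; exact C.map_collapse_ker) fun f hf ↦ by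
    rw [stretched_dk_pow] at hf ⊢
    exact mem_range_stretchedPow_iff hf

variable {C} in
lemma finrank_totalHomology_mem_BSet [CharP k p] (hperf : C.IsPerfect) (hna : C.NonAcyclic) :
    Module.finrank k C.TotalHomology ∈ BSet p n k := by
  have := hperf.stretched.finite
  refine ⟨C.stretched.toPDG, C.stretched.isFreeFG_toPDG, fun s hs hsp ↦ ?_,
    fun s _ hsp ↦ finite_H_toPDG hperf.stretched (by lia),
    (C.stretched.hBarEquiv 1 ≪≫ₗ C.stretchedHomologyEquiv).symm.finrank_eq⟩
  obtain ⟨f, hf, hf'⟩ := hna.exists_mem_ker_stretchedPow hs hsp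
  refine C.stretched.hBarNonzero_toPDG (v := f) ?_ ?_
  · rw [stretched_dk_pow]
    exact hf
  · rw [stretched_dk_pow]
    exact hf'

end KGCx

theorem stmt_1 (p n : ℕ) [Fact p.Prime] (k : Type) [Field k] [CharP k p]
    (C : KGCx p n k 2) (hperf : C.IsPerfect) (hna : C.NonAcyclic) :
    sInf (BSet p n k) ≤ Module.finrank k C.TotalHomology :=
  Nat.sInf_le (KGCx.finrank_totalHomology_mem_BSet hperf hna)
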